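/- Let M ≥ 2 and K be natural numbers. Let p : Fin K → ℝ satisfy p k ≥ 0 for all k and ∑ₖ p k = 1. Let a : Fin K → ℕ satisfy 1 ≤ a k < M for all k. For each k let f k, g k : ℂ → ℝ be measurable functions lying in L² of the Lebesgue (volume) measure on ℂ, with ∫_ℂ (f k α)² dα ≤ (2/π)^(2·(a k) − 1) / (2·(a k)) and ∫_ℂ (g k α)² dα ≤ (2/π)^(2·(M − a k) − 1) / (2·(M − a k)). Then ∫_ℂ |∑ₖ p k · f k α · g k α| dα ≤ (2/π)^(M−1) / (2·√(M−1)). -/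

import Mathlib

open MeasureTheory Real

lemma cs_aux (f g : ℂ → ℝ) (hf : MemLp f 2 volume) (hg : MemLp g 2 volume)
    (A B C : ℝ) (hA : 0 < A) (hC : 0 < C) (hAB : A * B = C ^ 2)
    (hfI : ∫ α : ℂ, (f α) ^ 2 ≤ A) (hgI : ∫ α : ℂ, (g α) ^ 2 ≤ B) :
    ∫ α : ℂ, |f α * g α| ≤ C := by
  have hf' := hf.integrable_sq
  have hg' := hg.integrable_sq
  have hfg : Integrable (fun α => f α * g α) volume := hf.integrable_mul hg
  have h1 : ∫ α : ℂ, |f α * g α| ≤ ∫ α : ℂ, (C / A / 2 * f α ^ 2 + A / C / 2 * g α ^ 2) := by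
    refine integral_mono hfg.abs ((hf'.const_mul _).add (hg'.const_mul _)) ?_
    intro x
    have hx : 0 ≤ C / A / 2 * (|f x| - A / C * |g x|) ^ 2 := by positivity
    have e : C / A / 2 * (|f x| - A / C * |g x|) ^ 2
        = C / A / 2 * |f x| ^ 2 + A / C / 2 * |g x| ^ 2 - |f x| * |g x| := by
      field_simp
      ring
    rw [e, sq_abs, sq_abs, ← abs_mul] at hx
    simpa using hx
  rw [integral_add (hf'.const_mul _) (hg'.const_mul _), integral_const_mul,
    integral_const_mul] at h1
  have h2 : C / A / 2 * ∫ α : ℂ, (f α) ^ 2 ≤ C / A / 2 * A := by gcongr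
  have h3 : A / C / 2 * ∫ α : ℂ, (g α) ^ 2 ≤ A / C / 2 * B := by gcongr
  have e2 : C / A / 2 * A = C / 2 := by field_simp
  have e3 : A / C / 2 * B = C / 2 := by
    field_simp
    linarith
  linarith

/-- Analytic core of Theorem 1: a convex combination of products of L²-bounded
slice factors has absolute volume at most `(2/π)^(M-1) / (2√(M-1))`. -/
theorem wigner_slice_abs_volume_bound
    (M K : ℕ) (hM : 2 ≤ M)
    (p : Fin K → ℝ) (hp : ∀ k, 0 ≤ p k) (hpsum : ∑ k, p k = 1)
    (a : Fin K → ℕ) (ha1 : ∀ k, 1 ≤ a k) (haM : ∀ k, a k < M)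
    (f g : Fin K → ℂ → ℝ)
    (hfm : ∀ k, Measurable (f k)) (hgm : ∀ k, Measurable (g k))
    (hf2 : ∀ k, MemLp (f k) 2 volume) (hg2 : ∀ k, MemLp (g k) 2 volume)
    (hfI : ∀ k, ∫ α : ℂ, (f k α) ^ 2
        ≤ (2 / π) ^ (2 * a k - 1) / (2 * (a k : ℝ)))
    (hgI : ∀ k, ∫ α : ℂ, (g k α) ^ 2
        ≤ (2 / π) ^ (2 * (M - a k) - 1) / (2 * ((M - a k : ℕ) : ℝ))) :
    ∫ α : ℂ, |∑ k, p k * f k α * g k α|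
      ≤ (2 / π) ^ (M - 1) / (2 * Real.sqrt ((M : ℝ) - 1)) := by
  have key : ∀ k, ∫ α : ℂ, |f k α * g k α|
      ≤ (2 / π) ^ (M - 1) / (2 * Real.sqrt ((M : ℝ) - 1)) := by
    intro k
    have h1 := ha1 k
    have h2 := haM k
    obtain ⟨b, hb⟩ : ∃ b, M = a k + b := ⟨M - a k, by omega⟩
    have hMb : M - a k = b := by omega
    have hb1 : 1 ≤ b := by omega
    have hg := hgI k
    rw [hMb] at hg
    have ha' : (1:ℝ) ≤ a k := by exact_mod_cast h1
    have hb' : (1:ℝ) ≤ b := by exact_mod_cast hb1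
    have hMr : (M:ℝ) = a k + b := by exact_mod_cast hb
    have hpi := Real.pi_pos
    have hC := cs_aux (f k) (g k) (hf2 k) (hg2 k) _ _
      ((2 / π) ^ (M - 1) / (2 * Real.sqrt ((a k : ℝ) * b)))
      (by positivity) (by positivity) ?_ (hfI k) hg
    · refine hC.trans ?_
      have : 0 < Real.sqrt ((M:ℝ) - 1) := Real.sqrt_pos.2 (by linarith)
      gcongr
      nlinarith
    · rw [div_mul_div_comm, ← pow_add, div_pow (_ ^ (M - 1)), mul_pow, Real.sq_sqrt (by positivity), ← pow_mul]
      congr 1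
      · congr 1
        omega
      · ring
  have hint : ∀ k, Integrable (fun α => f k α * g k α) volume :=
    fun k => (hf2 k).integrable_mul (hg2 k)
  calc ∫ α : ℂ, |∑ k, p k * f k α * g k α|
      ≤ ∫ α : ℂ, ∑ k, p k * |f k α * g k α| := by
        refine integral_mono (Integrable.abs (integrable_finsetSum _ fun k _ => ?_))
          (integrable_finsetSum _ fun k _ => (hint k).abs.const_mul _) ?_
        · simpa only [mul_assoc] using (hint k).const_mul (p k)
        · intro x
          refine (Finset.abs_sum_le_sum_abs _ _).trans (le_of_eq ?_)
          refine Finset.sum_congr rfl fun k _ => ?_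
          rw [mul_assoc, abs_mul, abs_of_nonneg (hp k)]
    _ = ∑ k, p k * ∫ α : ℂ, |f k α * g k α| := by
        rw [integral_finsetSum _ fun k _ => (hint k).abs.const_mul _]
        simp only [integral_const_mul]
    _ ≤ ∑ k, p k * ((2 / π) ^ (M - 1) / (2 * Real.sqrt ((M : ℝ) - 1))) :=
        Finset.sum_le_sum fun k _ => mul_le_mul_of_nonneg_left (key k) (hp k)
    _ = _ := by rw [← Finset.sum_mul, hpsum, one_mul]
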